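/- Let d ≥ 2, let Ψ(x) = ‖x‖^{1−d} for x ≠ 0, let a : ℝ^d → ℝ be smooth with 0 ≤ a ≤ 1, a ≡ 1 on B_1(0) and supp a ⊆ B_2(0), and let r ≥ 0 be an integer. There exists a constant C > 0, depending only on d, r and a, such that for every smooth f : ℝ^d → ℝ with finite uniformly local Sobolev norm ‖f‖_{H^r_ul} := ∑_{|β| ≤ r} sup_{x} ‖D^β f‖_{L²(B_1(x))}, the convolution (aΨ) * f is well defined and continuously differentiable, and each component of its gradient satisfies ∑_{|α| ≤ r} sup_{x ∈ ℝ^d} ‖D^α ∂_i ((aΨ) * f)‖_{L²(B_1(x))} ≤ C ‖f‖_{H^r_ul} for i = 1, …, d. -/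

import Mathlib

open MeasureTheory Metric
open scoped ENNReal

noncomputable section

/-- The partial derivative in the `i`-th coordinate direction. -/
def pd {d : ℕ} {F : Type*} [NormedAddCommGroup F] [NormedSpace ℝ F]
    (i : Fin d) (f : EuclideanSpace ℝ (Fin d) → F) : EuclideanSpace ℝ (Fin d) → F :=
  fun x => fderiv ℝ f x (EuclideanSpace.single i 1)

/-- The partial derivative `D^α` associated with a multi-index `α`. -/
def Dm {d : ℕ} {F : Type*} [NormedAddCommGroup F] [NormedSpace ℝ F]
    (α : Fin d → ℕ) (f : EuclideanSpace ℝ (Fin d) → F) : EuclideanSpace ℝ (Fin d) → F :=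
  (List.finRange d).foldr (fun i g => (pd i)^[α i] g) f

/-- The finite set of multi-indices `α` on `ℝ^d` with `|α| ≤ s`. -/
def mSet (d s : ℕ) : Finset (Fin d → ℕ) :=
  (Finset.Iic (fun _ => s : Fin d → ℕ)).filter fun α => (∑ i, α i) ≤ s

/-- The uniformly local Sobolev norm
`‖f‖_{H^s_ul} = ∑_{|α| ≤ s} sup_x ‖D^α f‖_{L²(B₁(x))}`. -/
def ulSobolev (d s : ℕ) {F : Type*} [NormedAddCommGroup F] [NormedSpace ℝ F]
    (f : EuclideanSpace ℝ (Fin d) → F) : ℝ≥0∞ :=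
  ∑ α ∈ mSet d s, ⨆ x : EuclideanSpace ℝ (Fin d),
    eLpNorm (Dm α f) 2 (volume.restrict (ball x 1))

/-- Second-order Taylor bound at `0` for `w ↦ (1 + w) ^ p` with a nonpositive exponent. -/
theorem exists_abs_one_add_rpow_sub_le {p : ℝ} (hp : p ≤ 0) :
    ∃ C : ℝ, 0 ≤ C ∧ ∀ w : ℝ, -(3 / 4) ≤ w → |(1 + w) ^ p - 1 - p * w| ≤ C * w ^ 2 := by
  have hder : ∀ q w : ℝ, -(3 / 4) ≤ w →
      HasDerivAt (fun w : ℝ => (1 + w) ^ q) (q * (1 + w) ^ (q - 1)) w := by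
    intro q w hw
    have h := ((hasDerivAt_id w).const_add 1).rpow_const (p := q) (Or.inl (by simp; linarith))
    simpa using h
  set A : ℝ := |p - 1| * (1 / 4 : ℝ) ^ (p - 1 - 1) with hA
  have hA0 : 0 ≤ A := by positivity
  have hlip : ∀ w : ℝ, -(3 / 4) ≤ w → |(1 + w) ^ (p - 1) - 1| ≤ A * |w| := by
    intro w hw
    have := (convex_Ici (-(3 / 4) : ℝ)).norm_image_sub_le_of_norm_hasDerivWithin_le
      (f := fun w : ℝ => (1 + w) ^ (p - 1)) (C := A) (x := 0) (y := w)
      (fun x hx => (hder (p - 1) x hx).hasDerivWithinAt) ?_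
      (Set.mem_Ici.2 (by norm_num)) (Set.mem_Ici.2 hw)
    · simpa using this
    · intro x hx
      have hx' : (1 / 4 : ℝ) ≤ 1 + x := by
        have : -(3 / 4) ≤ x := hx
        linarith
      rw [norm_mul, Real.norm_eq_abs, Real.norm_eq_abs, hA,
        abs_of_nonneg (Real.rpow_nonneg (by linarith : 0 ≤ 1 + x) _)]
      gcongr ?_ * ?_
      exact Real.rpow_le_rpow_of_nonpos (by norm_num) hx' (by linarith)
  refine ⟨|p| * A, by positivity, fun w hw => ?_⟩
  have hmem : ∀ x ∈ Set.uIcc 0 w, -(3 / 4) ≤ x ∧ |x| ≤ |w| := by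
    intro x hx
    rcases Set.mem_uIcc.1 hx with h | h
    · exact ⟨by linarith, abs_le_abs_of_nonneg h.1 h.2⟩
    · exact ⟨by linarith, abs_le_abs_of_nonpos h.2 h.1⟩
  have := (convex_uIcc 0 w).norm_image_sub_le_of_norm_hasDerivWithin_le
    (f := fun w : ℝ => (1 + w) ^ p - p * w) (f' := fun w => p * (1 + w) ^ (p - 1) - p * 1)
    (C := |p| * (A * |w|)) (x := 0) (y := w)
    (fun x hx => ((hder p x (hmem x hx).1).sub
      ((hasDerivAt_id x).const_mul p)).hasDerivWithinAt) ?_ Set.left_mem_uIcc Set.right_mem_uIcc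
  · have h2 : |p| * (A * |w|) * |w| = |p| * A * w ^ 2 := by rw [← sq_abs w]; ring
    rw [← h2]
    simp only [Real.norm_eq_abs, add_zero, Real.one_rpow, mul_zero, sub_zero] at this
    convert this using 2
    ring
  · intro x hx
    rw [← mul_sub, norm_mul, Real.norm_eq_abs, Real.norm_eq_abs]
    gcongr
    exact (hlip x (hmem x hx).1).trans (mul_le_mul_of_nonneg_left (hmem x hx).2 hA0)

section Kernel

variable {V : Type*} [NormedAddCommGroup V] [InnerProductSpace ℝ V]

/-- Decay of the second difference of `‖·‖ ^ (2 * p)` with a unit step. -/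
theorem exists_abs_second_diff_norm_rpow_le {p : ℝ} (hp : p ≤ 0) :
    ∃ C : ℝ, 0 ≤ C ∧ ∀ e z : V, ‖e‖ = 1 → 2 ≤ ‖z‖ →
      |‖z + e‖ ^ (2 * p) + ‖z - e‖ ^ (2 * p) - 2 * ‖z‖ ^ (2 * p)| ≤
        C * ‖z‖ ^ (2 * p - 2) := by
  obtain ⟨C, hC, h⟩ := exists_abs_one_add_rpow_sub_le hp
  refine ⟨2 * C * (25 / 4) + 2 * |p|, by positivity, fun e z he hz => ?_⟩
  set ρ := ‖z‖ with hρ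
  have hρ0 : 0 < ρ := by linarith
  set t : ℝ := inner ℝ z e with ht
  have htρ : |t| ≤ ρ := by simpa [he] using abs_real_inner_le_norm z e
  have hplus : ‖z + e‖ ^ 2 = ρ ^ 2 * (1 + (1 + 2 * t) / ρ ^ 2) := by
    rw [norm_add_sq_real, he]; field_simp; ring
  have hminus : ‖z - e‖ ^ 2 = ρ ^ 2 * (1 + (1 - 2 * t) / ρ ^ 2) := by
    rw [norm_sub_sq_real, he]; field_simp; ring
  have hw : ∀ s : ℝ, |s| ≤ ρ → -(3 / 4) ≤ (1 + 2 * s) / ρ ^ 2 ∧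
      ((1 + 2 * s) / ρ ^ 2) ^ 2 ≤ 25 / 4 * (ρ ^ 2)⁻¹ := by
    intro s hs
    obtain ⟨h1, h2⟩ := abs_le.1 hs
    constructor
    · rw [le_div_iff₀ (by positivity)]
      nlinarith
    · rw [div_pow, div_le_iff₀ (by positivity)]
      have : 25 / 4 * (ρ ^ 2)⁻¹ * (ρ ^ 2) ^ 2 = (5 / 2 * ρ) ^ 2 := by field_simp; ring
      rw [this]
      apply sq_le_sq'
      · linarith
      · linarith
  have hpow : ∀ (y : V) (w : ℝ), 0 ≤ 1 + w → ‖y‖ ^ 2 = ρ ^ 2 * (1 + w) →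
      ‖y‖ ^ (2 * p) = ρ ^ (2 * p) * (1 + w) ^ p := by
    intro y w hw0 hy
    rw [Real.rpow_mul (norm_nonneg _), Real.rpow_mul hρ0.le, Real.rpow_two, Real.rpow_two, hy,
      Real.mul_rpow (by positivity) hw0]
  obtain ⟨hp1, hp2⟩ := hw t htρ
  obtain ⟨hm1, hm2⟩ := hw (-t) (by simpa using htρ)
  rw [mul_neg, ← sub_eq_add_neg] at hm1 hm2
  have b1 := (h _ hp1).trans (mul_le_mul_of_nonneg_left hp2 hC)
  have b2 := (h _ hm1).trans (mul_le_mul_of_nonneg_left hm2 hC)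
  rw [hpow _ _ (by linarith) hplus, hpow _ _ (by linarith) hminus]
  set wp := (1 + 2 * t) / ρ ^ 2 with hwp
  set wm := (1 - 2 * t) / ρ ^ 2 with hwm
  have hsum : wp + wm = 2 * (ρ ^ 2)⁻¹ := by rw [hwp, hwm]; field_simp; ring
  have key : |(1 + wp) ^ p + (1 + wm) ^ p - 2| ≤
      (2 * C * (25 / 4) + 2 * |p|) * (ρ ^ 2)⁻¹ := by
    have e1 : (1 + wp) ^ p + (1 + wm) ^ p - 2 =
        ((1 + wp) ^ p - 1 - p * wp) + ((1 + wm) ^ p - 1 - p * wm) + p * (2 * (ρ ^ 2)⁻¹) := by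
      rw [← hsum]; ring
    have e2 : |p * (2 * (ρ ^ 2)⁻¹)| = |p| * (2 * (ρ ^ 2)⁻¹) := by
      rw [abs_mul, abs_of_nonneg (by positivity : 0 ≤ 2 * (ρ ^ 2)⁻¹)]
    rw [e1]
    refine (abs_add_three _ _ _).trans ?_
    rw [e2]
    nlinarith
  have e3 : ρ ^ (2 * p) * (1 + wp) ^ p + ρ ^ (2 * p) * (1 + wm) ^ p - 2 * ρ ^ (2 * p) =
      ρ ^ (2 * p) * ((1 + wp) ^ p + (1 + wm) ^ p - 2) := by ring
  rw [e3, abs_mul, abs_of_nonneg (Real.rpow_nonneg hρ0.le _), Real.rpow_sub hρ0, Real.rpow_two]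
  calc _ ≤ ρ ^ (2 * p) * ((2 * C * (25 / 4) + 2 * |p|) * (ρ ^ 2)⁻¹) := by gcongr
    _ = _ := by rw [div_eq_mul_inv]; ring

end Kernel

section KernelIntegral

open Module

variable {V : Type*} [NormedAddCommGroup V] [InnerProductSpace ℝ V] [FiniteDimensional ℝ V]
  [MeasurableSpace V] [BorelSpace V]

theorem integrable_indicator_ball_norm_rpow {d : ℕ} (hn : finrank ℝ V = d) (hd : 1 ≤ d) (R : ℝ) :
    Integrable ((ball (0 : V) R).indicator fun y => ‖y‖ ^ ((1 : ℝ) - d)) := by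
  rw [integrable_indicator_iff measurableSet_ball]
  refine integrableOn_ball_of_norm_le_rpow (C := 1) (α := d - 1) (by omega)
    (by rw [hn]; linarith) ?_ (Measurable.aestronglyMeasurable (by fun_prop))
  filter_upwards with x
  rw [Real.norm_of_nonneg (by positivity), neg_sub, one_mul]

/-- The second differences of `‖·‖ ^ (1 - d)` are `O(‖h‖)` in `L¹`, with integrable majorants. -/
theorem exists_second_diff_norm_rpow_majorant {d : ℕ} (hn : finrank ℝ V = d) (hd : 1 ≤ d) :
    ∃ C : ℝ, ∀ h : V, h ≠ 0 → ∃ G : V → ℝ, Integrable G ∧ ∫ y, G y ≤ C * ‖h‖ ∧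
      ∀ y, |‖y + h‖ ^ ((1 : ℝ) - d) + ‖y - h‖ ^ ((1 : ℝ) - d) - 2 * ‖y‖ ^ ((1 : ℝ) - d)| ≤
        G y := by
  have hd' : (1 : ℝ) ≤ d := by exact_mod_cast hd
  obtain ⟨C, hC, hdecay⟩ := exists_abs_second_diff_norm_rpow_le (V := V)
    (p := (1 - (d : ℝ)) / 2) (by linarith)
  have h2p : 2 * ((1 - (d : ℝ)) / 2) = 1 - d := by ring
  rw [h2p] at hdecay
  set P : V → ℝ := (ball (0 : V) 3).indicator fun y => ‖y‖ ^ ((1 : ℝ) - d) with hP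
  have hPint : Integrable P := integrable_indicator_ball_norm_rpow hn hd 3
  have hP0 : ∀ y, 0 ≤ P y := fun y => Set.indicator_nonneg (fun _ _ => by positivity) y
  have hPeq : ∀ y, ‖y‖ < 3 → P y = ‖y‖ ^ ((1 : ℝ) - d) := fun y hy =>
    Set.indicator_of_mem (mem_ball_zero_iff.2 hy) _
  set J : V → ℝ := fun y => (1 + ‖y‖) ^ (-((d : ℝ) + 1)) with hJ
  have hJint : Integrable J := integrable_one_add_norm (by rw [hn]; linarith)
  have hJ0 : ∀ y, 0 ≤ J y := fun y => by positivity
  set C₁ : ℝ := C * (1 / 2 : ℝ) ^ (-((d : ℝ) + 1)) with hC₁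
  have hC₁0 : 0 ≤ C₁ := by positivity
  have hunit : ∀ e z : V, ‖e‖ = 1 →
      |‖z + e‖ ^ ((1 : ℝ) - d) + ‖z - e‖ ^ ((1 : ℝ) - d) - 2 * ‖z‖ ^ ((1 : ℝ) - d)| ≤
        P (z + e) + P (z - e) + 2 * P z + C₁ * J z := by
    intro e z he
    rcases lt_or_ge ‖z‖ 2 with hz | hz
    · rw [hPeq (z + e) (by linarith [norm_add_le z e]), hPeq (z - e) (by linarith [norm_sub_le z e]),
        hPeq z (by linarith)]
      have h1 : 0 ≤ ‖z + e‖ ^ ((1 : ℝ) - d) := by positivity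
      have h2 : 0 ≤ ‖z - e‖ ^ ((1 : ℝ) - d) := by positivity
      have h3 : 0 ≤ ‖z‖ ^ ((1 : ℝ) - d) := by positivity
      have h4 := mul_nonneg hC₁0 (hJ0 z)
      rw [abs_le]
      constructor <;> linarith
    · have h1 := hdecay e z he hz
      have h2 : ‖z‖ ^ ((1 : ℝ) - d - 2) ≤ (1 / 2 : ℝ) ^ (-((d : ℝ) + 1)) * J z := by
        rw [hJ, ← Real.mul_rpow (by norm_num) (by positivity)]
        have : (1 : ℝ) - d - 2 = -((d : ℝ) + 1) := by ring
        rw [this]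
        exact Real.rpow_le_rpow_of_nonpos (by positivity) (by linarith) (by linarith)
      have h3 := mul_le_mul_of_nonneg_left h2 hC
      rw [← mul_assoc, ← hC₁] at h3
      linarith [hP0 (z + e), hP0 (z - e), hP0 z]
  refine ⟨4 * (∫ y, P y) + C₁ * ∫ y, J y, fun h hh => ?_⟩
  set s := ‖h‖ with hs
  have hs0 : 0 < s := norm_pos_iff.2 hh
  set e : V := s⁻¹ • h with he
  have he1 : ‖e‖ = 1 := by
    rw [he, norm_smul, Real.norm_of_nonneg (by positivity), ← hs, inv_mul_cancel₀ hs0.ne']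
  set Q : V → ℝ := fun z => P (z + e) + P (z - e) + 2 * P z + C₁ * J z with hQ
  have i1 : Integrable fun z => P (z + e) := hPint.comp_add_right e
  have i2 : Integrable fun z => P (z - e) := hPint.comp_sub_right e
  have i3 : Integrable fun z => 2 * P z := hPint.const_mul 2
  have i4 : Integrable fun z => C₁ * J z := hJint.const_mul C₁
  have hQint : Integrable Q := ((i1.add i2).add i3).add i4
  have hQval : ∫ z, Q z = 4 * (∫ y, P y) + C₁ * ∫ y, J y := by
    have : ∫ z, Q z = (∫ z, P (z + e)) + (∫ z, P (z - e)) + (∫ z, 2 * P z) + ∫ z, C₁ * J z := by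
      rw [integral_add (i1.fun_add i2 |>.fun_add i3) i4, integral_add (i1.fun_add i2) i3,
        integral_add i1 i2]
    rw [this, integral_add_right_eq_self, integral_sub_right_eq_self, integral_const_mul,
      integral_const_mul]
    ring
  refine ⟨fun y => s ^ ((1 : ℝ) - d) * Q (s⁻¹ • y),
    (hQint.comp_smul (inv_ne_zero hs0.ne')).const_mul _, ?_, fun y => ?_⟩
  · rw [integral_const_mul, Measure.integral_comp_smul_of_nonneg _ _ _ (hR := by positivity),
      hQval, hn, smul_eq_mul, inv_pow, inv_inv, ← mul_assoc, ← Real.rpow_natCast s d,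
      ← Real.rpow_add hs0]
    simp [mul_comm]
  · have hscale : ∀ x : V, ‖x‖ ^ ((1 : ℝ) - d) =
        s ^ ((1 : ℝ) - d) * ‖s⁻¹ • x‖ ^ ((1 : ℝ) - d) := by
      intro x
      rw [← Real.mul_rpow hs0.le (norm_nonneg _), norm_smul, Real.norm_of_nonneg (by positivity),
        mul_inv_cancel_left₀ hs0.ne']
    rw [hscale (y + h), hscale (y - h), hscale y, smul_add, smul_sub, ← he]
    have hpos : 0 ≤ s ^ ((1 : ℝ) - d) := by positivity
    rw [← mul_left_comm, ← mul_add, ← mul_sub, abs_mul, abs_of_nonneg hpos]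
    exact mul_le_mul_of_nonneg_left (hunit e (s⁻¹ • y) he1) hpos

/-- The second differences of the truncated kernel `a * ‖·‖ ^ (1 - d)` are `O(‖h‖)` in `L¹`. -/
theorem exists_integral_second_diff_truncated_le {d : ℕ} (hn : finrank ℝ V = d) (hd : 1 ≤ d)
    {a : V → ℝ} {L : NNReal} (ha : LipschitzWith L a) (ha0 : ∀ x, 0 ≤ a x) (ha1 : ∀ x, a x ≤ 1)
    (hasupp : Function.support a ⊆ ball 0 2) :
    ∃ C : ℝ, ∀ h : V, h ≠ 0 → ‖h‖ ≤ 1 →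
      ∫ y, |a (y + h) * ‖y + h‖ ^ ((1 : ℝ) - d) + a (y - h) * ‖y - h‖ ^ ((1 : ℝ) - d)
        - 2 * (a y * ‖y‖ ^ ((1 : ℝ) - d))| ≤ C * ‖h‖ := by
  obtain ⟨C, hC⟩ := exists_second_diff_norm_rpow_majorant (V := V) hn hd
  set P : V → ℝ := (ball (0 : V) 3).indicator fun y => ‖y‖ ^ ((1 : ℝ) - d) with hP
  have hPint : Integrable P := integrable_indicator_ball_norm_rpow hn hd 3
  have hP0 : ∀ y, 0 ≤ P y := fun y => Set.indicator_nonneg (fun _ _ => by positivity) y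
  have hzero : ∀ y, 2 ≤ ‖y‖ → a y = 0 := fun y hy => by
    by_contra hne
    exact absurd (mem_ball_zero_iff.1 (hasupp hne)) (not_lt.2 hy)
  have hLip : ∀ y k : V, ‖k‖ ≤ 1 →
      |(a (y + k) - a y) * ‖y + k‖ ^ ((1 : ℝ) - d)| ≤ L * ‖k‖ * P (y + k) := by
    intro y k hk
    rw [abs_mul, abs_of_nonneg (by positivity : 0 ≤ ‖y + k‖ ^ ((1 : ℝ) - d))]
    by_cases hy : ‖y + k‖ < 3
    · rw [hP, Set.indicator_of_mem (mem_ball_zero_iff.2 hy)]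
      gcongr
      simpa [Real.dist_eq] using ha.dist_le_mul (y + k) y
    · push Not at hy
      have h1 : 2 ≤ ‖y‖ := by linarith [norm_add_le y k]
      rw [hzero _ (by linarith), hzero _ h1]
      simp only [sub_zero, abs_zero, zero_mul]
      have := hP0 (y + k)
      positivity
  refine ⟨C + 2 * L * ∫ y, P y, fun h hh hh1 => ?_⟩
  obtain ⟨G, hGint, hGle, hG⟩ := hC h hh
  have i1 : Integrable fun y => L * ‖h‖ * P (y + h) := (hPint.comp_add_right h).const_mul _
  have i2 : Integrable fun y => L * ‖h‖ * P (y - h) := (hPint.comp_sub_right h).const_mul _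
  calc
    _ ≤ ∫ y, (G y + L * ‖h‖ * P (y + h) + L * ‖h‖ * P (y - h)) := by
      refine integral_mono_of_nonneg (.of_forall fun y => abs_nonneg _) ((hGint.add i1).add i2)
        (.of_forall fun y => ?_)
      have e1 : a (y + h) * ‖y + h‖ ^ ((1 : ℝ) - d) + a (y - h) * ‖y - h‖ ^ ((1 : ℝ) - d)
          - 2 * (a y * ‖y‖ ^ ((1 : ℝ) - d)) =
          a y * (‖y + h‖ ^ ((1 : ℝ) - d) + ‖y - h‖ ^ ((1 : ℝ) - d) - 2 * ‖y‖ ^ ((1 : ℝ) - d)) +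
          (a (y + h) - a y) * ‖y + h‖ ^ ((1 : ℝ) - d) +
          (a (y - h) - a y) * ‖y - h‖ ^ ((1 : ℝ) - d) := by ring
      have b1 := hLip y h hh1
      have b2 := hLip y (-h) (by simpa using hh1)
      rw [norm_neg, ← sub_eq_add_neg] at b2
      have b3 : |a y * (‖y + h‖ ^ ((1 : ℝ) - d) + ‖y - h‖ ^ ((1 : ℝ) - d)
          - 2 * ‖y‖ ^ ((1 : ℝ) - d))| ≤ G y := by
        rw [abs_mul, abs_of_nonneg (ha0 y)]
        exact (mul_le_of_le_one_left (abs_nonneg _) (ha1 y)).trans (hG y)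
      simp only [e1]
      exact (abs_add_three _ _ _).trans (by linarith)
    _ = (∫ y, G y) + L * ‖h‖ * (∫ y, P y) + L * ‖h‖ * ∫ y, P y := by
      rw [integral_add (hGint.fun_add i1) i2, integral_add hGint i1, integral_const_mul,
        integral_const_mul, integral_add_right_eq_self, integral_sub_right_eq_self]
    _ ≤ _ := by linarith

open scoped FourierTransform RealInnerProductSpace in
/-- A function whose second differences are `O(‖h‖)` in `L¹` has Fourier transform
`O(‖ξ‖⁻¹)`. -/
theorem exists_norm_mul_fourier_le {K : V → ℂ} (hK : Integrable K) {C : ℝ}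
    (hC : ∀ h : V, h ≠ 0 → ‖h‖ ≤ 1 → ∫ y, ‖K (y + h) + K (y - h) - 2 * K y‖ ≤ C * ‖h‖) :
    ∃ M : ℝ, 0 ≤ M ∧ ∀ ξ : V, ‖ξ‖ * ‖𝓕 K ξ‖ ≤ M := by
  refine ⟨max (∫ y, ‖K y‖) (C / 8), le_max_of_le_left (integral_nonneg fun _ => norm_nonneg _),
    fun ξ => ?_⟩
  have hbd : ∀ f : V → ℂ, ‖∫ v, Real.fourierChar (-⟪v, ξ⟫) • f v‖ ≤ ∫ v, ‖f v‖ := fun f =>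
    (norm_integral_le_integral_norm _).trans_eq (by simp [Circle.norm_smul])
  have hF : 𝓕 K ξ = ∫ v, Real.fourierChar (-⟪v, ξ⟫) • K v := Real.fourier_eq K ξ
  rcases le_or_gt ‖ξ‖ (1 / 2) with hξ | hξ
  · refine le_max_of_le_left ?_
    have := hbd K
    rw [← hF] at this
    nlinarith [norm_nonneg (𝓕 K ξ), norm_nonneg ξ]
  · refine le_max_of_le_right ?_
    have hξ0 : ξ ≠ 0 := norm_pos_iff.1 (by linarith)
    have hξp : 0 < ‖ξ‖ := by linarith
    set h : V := (1 / (2 * ‖ξ‖ ^ 2) : ℝ) • ξ with hh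
    have hnorm : ‖h‖ = 1 / (2 * ‖ξ‖) := by
      rw [hh, norm_smul, Real.norm_of_nonneg (by positivity)]
      field_simp
    have hh0 : h ≠ 0 := norm_pos_iff.1 (by rw [hnorm]; positivity)
    have hh1 : ‖h‖ ≤ 1 := by
      rw [hnorm, div_le_one (by positivity)]
      linarith
    have t1 := fourierIntegral_half_period_translate (f := K) hξ0
    have t2 := fourierIntegral_half_period_translate (f := fun v => K (v - h)) hξ0
    simp only [← hh, add_sub_cancel_right] at t1 t2
    have i0 : Integrable fun v => Real.fourierChar (-⟪v, ξ⟫) • K v :=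
      (Real.fourierIntegral_convergent_iff ξ).2 hK
    have i1 : Integrable fun v => Real.fourierChar (-⟪v, ξ⟫) • K (v + h) :=
      (Real.fourierIntegral_convergent_iff ξ).2 (hK.comp_add_right h)
    have i2 : Integrable fun v => Real.fourierChar (-⟪v, ξ⟫) • K (v - h) :=
      (Real.fourierIntegral_convergent_iff ξ).2 (hK.comp_sub_right h)
    have key : ∫ v, Real.fourierChar (-⟪v, ξ⟫) • (K (v + h) + K (v - h) - 2 * K v) =
        -4 * 𝓕 K ξ := by
      have : ∀ v, Real.fourierChar (-⟪v, ξ⟫) • (K (v + h) + K (v - h) - 2 * K v) =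
          Real.fourierChar (-⟪v, ξ⟫) • K (v + h) + Real.fourierChar (-⟪v, ξ⟫) • K (v - h)
          - 2 * Real.fourierChar (-⟪v, ξ⟫) • K v := by
        intro v
        simp only [Circle.smul_def, smul_eq_mul]
        ring
      simp only [this]
      rw [integral_sub (i1.fun_add i2) (i0.const_mul 2), integral_add i1 i2, integral_const_mul, t1, hF]
      linear_combination t2
    have b := hbd fun v => K (v + h) + K (v - h) - 2 * K v
    rw [key, norm_mul, norm_neg] at b
    have b2 := b.trans (hC h hh0 hh1)
    rw [hnorm] at b2
    norm_num at b2
    have : ‖ξ‖ * (4 * ‖𝓕 K ξ‖) ≤ ‖ξ‖ * (C * (‖ξ‖⁻¹ * (1 / 2))) := by gcongr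
    have e : ‖ξ‖ * (C * (‖ξ‖⁻¹ * (1 / 2))) = C / 2 := by field_simp
    linarith

end KernelIntegral

section Plancherel

open scoped FourierTransform SchwartzMap LineDeriv Convolution ContDiff
open ContinuousLinearMap

variable {V : Type*} [NormedAddCommGroup V] [InnerProductSpace ℝ V] [FiniteDimensional ℝ V]
  [MeasurableSpace V] [BorelSpace V]

theorem SchwartzMap.eLpNorm_fourier_two (f : 𝓢(V, ℂ)) :
    eLpNorm (𝓕 f : 𝓢(V, ℂ)) 2 volume = eLpNorm f 2 volume := by
  have h := SchwartzMap.norm_fourier_toL2_eq f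
  rw [SchwartzMap.norm_toLp, SchwartzMap.norm_toLp] at h
  have h₁ : eLpNorm (𝓕 f : 𝓢(V, ℂ)) 2 volume ≠ ⊤ := (SchwartzMap.eLpNorm_lt_top _ 2 volume).ne
  have h₂ : eLpNorm f 2 volume ≠ ⊤ := (SchwartzMap.eLpNorm_lt_top _ 2 volume).ne
  rw [← ENNReal.ofReal_toReal h₁, h, ENNReal.ofReal_toReal h₂]

/-- If `ξ ↦ ‖ξ‖ * ‖𝓕 K ξ‖` is bounded, then the derivative of convolution with `K` is bounded
on `L²`. -/
theorem eLpNorm_fderiv_convolution_le {K : V → ℝ} (hK : Integrable K) (hKc : HasCompactSupport K)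
    {M : ℝ} (hM : ∀ ξ : V, ‖ξ‖ * ‖𝓕 (fun y => (K y : ℂ)) ξ‖ ≤ M) {h : V → ℝ}
    (hh : ContDiff ℝ ∞ h) (hhc : HasCompactSupport h) (v : V) :
    eLpNorm (fun x => fderiv ℝ (K ⋆[mul ℝ ℝ] h) x v) 2 volume ≤
      ENNReal.ofReal (2 * Real.pi * ‖v‖ * M) * eLpNorm h 2 volume := by
  have hu : ContDiff ℝ ∞ (K ⋆[mul ℝ ℝ] h) :=
    hhc.contDiff_convolution_right (n := ⊤) _ hK.locallyIntegrable hh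
  have huc : HasCompactSupport (K ⋆[mul ℝ ℝ] h) := hKc.convolution _ hhc
  let H : 𝓢(V, ℂ) := (hhc.comp_left Complex.ofReal_zero).toSchwartzMap
    (Complex.ofRealCLM.contDiff.comp hh)
  let U : 𝓢(V, ℂ) := (huc.comp_left Complex.ofReal_zero).toSchwartzMap
    (Complex.ofRealCLM.contDiff.comp hu)
  have hUconv : (U : V → ℂ) = (fun y => (K y : ℂ)) ⋆[mul ℂ ℂ] (H : V → ℂ) := by
    ext x
    change ((∫ t, K t * h (x - t) : ℝ) : ℂ) = ∫ t, (K t : ℂ) * (h (x - t) : ℂ)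
    rw [← integral_complex_ofReal]
    simp
  have hFU : ∀ ξ, (𝓕 U) ξ = 𝓕 (fun y => (K y : ℂ)) ξ * (𝓕 H) ξ := by
    intro ξ
    have hKC : Integrable fun y => (K y : ℂ) := hK.ofReal
    rw [SchwartzMap.fourier_coe, SchwartzMap.fourier_coe, hUconv,
      Real.fourier_mul_convolution_eq hKC H.integrable]
  have hDU : ∀ x, (∂_{v} U) x = ((fderiv ℝ (K ⋆[mul ℝ ℝ] h) x v : ℝ) : ℂ) := by
    intro x
    have := (Complex.ofRealCLM.hasFDerivAt (x := (K ⋆[mul ℝ ℝ] h) x)).comp x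
      (hu.differentiable (by simp) x).hasFDerivAt
    rw [SchwartzMap.lineDerivOp_apply_eq_fderiv]
    change fderiv ℝ (Complex.ofRealCLM ∘ (K ⋆[mul ℝ ℝ] h)) x v = _
    rw [this.fderiv]
    rfl
  have hbound : ∀ ξ, ‖(𝓕 (∂_{v} U)) ξ‖ ≤ 2 * Real.pi * ‖v‖ * M * ‖(𝓕 H) ξ‖ := by
    intro ξ
    have ht : (inner ℝ · v : V → ℝ).HasTemperateGrowth := by fun_prop
    rw [SchwartzMap.fourier_lineDerivOp_eq, smul_apply,
      SchwartzMap.smulLeftCLM_apply_apply ht, hFU, norm_smul, norm_smul]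
    have e1 : ‖(2 * Real.pi * Complex.I : ℂ)‖ = 2 * Real.pi := by
      simp [abs_of_pos Real.pi_pos]
    rw [e1, norm_mul]
    calc 2 * Real.pi * (‖(inner ℝ ξ v : ℝ)‖ * (‖𝓕 (fun y => (K y : ℂ)) ξ‖ * ‖(𝓕 H) ξ‖))
        ≤ 2 * Real.pi * ((‖ξ‖ * ‖v‖) * (‖𝓕 (fun y => (K y : ℂ)) ξ‖ * ‖(𝓕 H) ξ‖)) := by
          gcongr
          exact norm_inner_le_norm ξ v
      _ = 2 * Real.pi * ‖v‖ * (‖ξ‖ * ‖𝓕 (fun y => (K y : ℂ)) ξ‖) * ‖(𝓕 H) ξ‖ := by ring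
      _ ≤ _ := by
          gcongr
          exact hM ξ
  calc eLpNorm (fun x => fderiv ℝ (K ⋆[mul ℝ ℝ] h) x v) 2 volume
      = eLpNorm (∂_{v} U : 𝓢(V, ℂ)) 2 volume :=
        eLpNorm_congr_norm_ae (.of_forall fun x => by rw [hDU, Complex.norm_real])
    _ = eLpNorm (𝓕 (∂_{v} U) : 𝓢(V, ℂ)) 2 volume := (SchwartzMap.eLpNorm_fourier_two _).symm
    _ ≤ ENNReal.ofReal (2 * Real.pi * ‖v‖ * M) * eLpNorm (𝓕 H : 𝓢(V, ℂ)) 2 volume :=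
        eLpNorm_le_mul_eLpNorm_of_ae_le_mul (.of_forall hbound) 2
    _ = ENNReal.ofReal (2 * Real.pi * ‖v‖ * M) * eLpNorm h 2 volume := by
        rw [SchwartzMap.eLpNorm_fourier_two]
        congr 1
        exact eLpNorm_congr_norm_ae (.of_forall fun x => Complex.norm_real _)

end Plancherel

section Localization

open scoped Convolution ContDiff
open ContinuousLinearMap

variable {V : Type*} [NormedAddCommGroup V] [InnerProductSpace ℝ V] [FiniteDimensional ℝ V]

/-- Smooth compactly supported truncation of a smooth function near a point. -/
theorem exists_contDiff_cutoff {f : V → ℝ} (hf : ContDiff ℝ ∞ f) (x₀ : V) :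
    ∃ g : V → ℝ, ContDiff ℝ ∞ g ∧ HasCompactSupport g ∧ Set.EqOn f g (ball x₀ 3) ∧
      ∀ y, ‖g y‖ ≤ ‖(ball x₀ 4).indicator f y‖ := by
  let χ : ContDiffBump x₀ := ⟨3, 4, by norm_num, by norm_num⟩
  refine ⟨fun y => χ y * f y, χ.contDiff.mul hf, χ.hasCompactSupport.mul_right, fun y hy => ?_,
    fun y => ?_⟩
  · have : χ y = 1 := χ.one_of_mem_closedBall (ball_subset_closedBall hy)
    simp [this]
  · by_cases hy : y ∈ ball x₀ 4
    · rw [Set.indicator_of_mem hy, norm_mul, Real.norm_of_nonneg χ.nonneg]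
      exact mul_le_of_le_one_left (norm_nonneg _) χ.le_one
    · have : χ y = 0 := χ.zero_of_le_dist (not_lt.1 hy)
      simp [this]

variable [MeasurableSpace V] [BorelSpace V]

/-- The `L²` norm on a ball of radius `R` is controlled by the `L²` norms on unit balls. -/
theorem exists_eLpNorm_ball_le_iSup (V : Type*) [NormedAddCommGroup V] [InnerProductSpace ℝ V]
    [FiniteDimensional ℝ V] [MeasurableSpace V] [BorelSpace V] (R : ℝ) :
    ∃ N : ℕ, ∀ (g : V → ℝ), Continuous g → ∀ x : V,
      eLpNorm g 2 (volume.restrict (ball x R)) ≤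
        N * ⨆ z : V, eLpNorm g 2 (volume.restrict (ball z 1)) := by
  obtain ⟨t, -, htf, ht⟩ := (isCompact_closedBall (0 : V) R).finite_cover_balls zero_lt_one
  lift t to Finset V using htf
  refine ⟨t.card, fun g hg x => ?_⟩
  have hmeas : ∀ c ∈ t, AEStronglyMeasurable ((ball (x + c) 1).indicator fun y => ‖g y‖) volume :=
    fun c _ => hg.norm.aestronglyMeasurable.indicator measurableSet_ball
  have hnonneg : ∀ c y, 0 ≤ (ball (x + c) 1).indicator (fun y => ‖g y‖) y :=
    fun c y => Set.indicator_nonneg (fun _ _ => norm_nonneg _) y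
  calc eLpNorm g 2 (volume.restrict (ball x R))
      = eLpNorm ((ball x R).indicator g) 2 volume :=
        (eLpNorm_indicator_eq_eLpNorm_restrict measurableSet_ball).symm
    _ ≤ eLpNorm (∑ c ∈ t, (ball (x + c) 1).indicator fun y => ‖g y‖) 2 volume := by
        refine eLpNorm_mono_real fun y => ?_
        rw [Finset.sum_apply]
        by_cases hy : y ∈ ball x R
        · have hy' : y - x ∈ closedBall (0 : V) R := by
            rw [mem_closedBall_zero_iff, ← dist_eq_norm]
            exact (mem_ball.1 hy).le
          obtain ⟨c, hc, hyc⟩ := Set.mem_iUnion₂.1 (ht hy')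
          have hyc' : y ∈ ball (x + c) 1 := by
            rw [mem_ball, dist_eq_norm] at hyc ⊢
            rwa [← sub_sub]
          rw [Set.indicator_of_mem hy]
          refine le_trans ?_ (Finset.single_le_sum (fun c _ => hnonneg c y) hc)
          rw [Set.indicator_of_mem hyc']
        · rw [Set.indicator_of_notMem hy, norm_zero]
          exact Finset.sum_nonneg fun c _ => hnonneg c y
    _ ≤ ∑ c ∈ t, eLpNorm ((ball (x + c) 1).indicator fun y => ‖g y‖) 2 volume :=
        eLpNorm_sum_le hmeas (by norm_num)
    _ ≤ ∑ _c ∈ t, ⨆ z : V, eLpNorm g 2 (volume.restrict (ball z 1)) := by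
        refine Finset.sum_le_sum fun c _ => ?_
        rw [eLpNorm_indicator_eq_eLpNorm_restrict measurableSet_ball, eLpNorm_norm]
        exact le_iSup (fun z : V => eLpNorm g 2 (volume.restrict (ball z 1))) (x + c)
    _ = _ := by simp

theorem eqOn_convolution_of_eqOn {K f g : V → ℝ} (hK : Function.support K ⊆ ball 0 2) {x₀ : V}
    (hfg : Set.EqOn f g (ball x₀ 3)) :
    Set.EqOn (K ⋆[mul ℝ ℝ] f) (K ⋆[mul ℝ ℝ] g) (ball x₀ 1) := by
  intro x hx
  refine integral_congr_ae (.of_forall fun t => ?_)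
  by_cases ht : K t = 0
  · simp [ht]
  · have h2 : ‖t‖ < 2 := mem_ball_zero_iff.1 (hK ht)
    have : x - t ∈ ball x₀ 3 := by
      rw [mem_ball, dist_eq_norm] at hx ⊢
      have e : x - t - x₀ = (x - x₀) - t := by abel
      rw [e]
      linarith [norm_sub_le (x - x₀) t]
    simp [hfg this]

theorem contDiff_convolution_of_support_subset {K f : V → ℝ} (hKi : Integrable K)
    (hK : Function.support K ⊆ ball 0 2) (hf : ContDiff ℝ ∞ f) :
    ContDiff ℝ ∞ (K ⋆[mul ℝ ℝ] f) := by
  refine contDiff_iff_contDiffAt.2 fun x => ?_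
  obtain ⟨g, hg, hgc, hfg, -⟩ := exists_contDiff_cutoff hf x
  have hc : ContDiff ℝ ∞ (K ⋆[mul ℝ ℝ] g) :=
    hgc.contDiff_convolution_right (n := ⊤) _ hKi.locallyIntegrable hg
  exact hc.contDiffAt.congr_of_eventuallyEq
    ((eqOn_convolution_of_eqOn hK hfg).eventuallyEq_of_mem (ball_mem_nhds x one_pos))

theorem fderiv_convolution_apply {K f : V → ℝ} (hKi : Integrable K)
    (hK : Function.support K ⊆ ball 0 2) (hf : ContDiff ℝ ∞ f) (x v : V) :
    fderiv ℝ (K ⋆[mul ℝ ℝ] f) x v = (K ⋆[mul ℝ ℝ] fun y => fderiv ℝ f y v) x := by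
  obtain ⟨g, hg, hgc, hfg, -⟩ := exists_contDiff_cutoff hf x
  have hfg' : Set.EqOn (fun y => fderiv ℝ f y v) (fun y => fderiv ℝ g y v) (ball x 3) :=
    fun y hy => by
      simp only
      rw [(hfg.eventuallyEq_of_mem (isOpen_ball.mem_nhds hy)).fderiv_eq]
  rw [((eqOn_convolution_of_eqOn hK hfg).eventuallyEq_of_mem
      (ball_mem_nhds x one_pos)).fderiv_eq,
    eqOn_convolution_of_eqOn hK hfg' (mem_ball_self one_pos),
    (hgc.hasFDerivAt_convolution_right (mul ℝ ℝ) hKi.locallyIntegrable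
      (hg.of_le (by simp)) x).fderiv]
  exact convolution_precompR_apply _ hKi.locallyIntegrable (hgc.fderiv ℝ)
    (hg.continuous_fderiv (by simp)) x v

/-- `L²_ul` boundedness of `f ↦ ∂_v (K * f)`, provided `ξ ↦ ‖ξ‖ * ‖𝓕 K ξ‖` is bounded. -/
theorem exists_iSup_eLpNorm_fderiv_convolution_le {K : V → ℝ} (hKi : Integrable K)
    (hK : Function.support K ⊆ ball 0 2) {M : ℝ} (hM0 : 0 ≤ M)
    (hM : ∀ ξ : V, ‖ξ‖ * ‖FourierTransform.fourier (fun y => (K y : ℂ)) ξ‖ ≤ M) :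
    ∃ C : ℝ, 0 < C ∧ ∀ v : V, ‖v‖ ≤ 1 → ∀ f : V → ℝ, ContDiff ℝ ∞ f →
      ⨆ x : V, eLpNorm (fun x => fderiv ℝ (K ⋆[mul ℝ ℝ] f) x v) 2 (volume.restrict (ball x 1)) ≤
        ENNReal.ofReal C * ⨆ x : V, eLpNorm f 2 (volume.restrict (ball x 1)) := by
  obtain ⟨N, hN⟩ := exists_eLpNorm_ball_le_iSup V 4
  refine ⟨2 * Real.pi * M * N + 1, by positivity, fun v hv f hf => iSup_le fun x₀ => ?_⟩
  obtain ⟨g, hg, hgc, hfg, hgle⟩ := exists_contDiff_cutoff hf x₀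
  have hKc : HasCompactSupport K :=
    .of_support_subset_isCompact (isCompact_closedBall 0 2) (hK.trans ball_subset_closedBall)
  set S := ⨆ x : V, eLpNorm f 2 (volume.restrict (ball x 1))
  calc eLpNorm (fun x => fderiv ℝ (K ⋆[mul ℝ ℝ] f) x v) 2 (volume.restrict (ball x₀ 1))
      = eLpNorm (fun x => fderiv ℝ (K ⋆[mul ℝ ℝ] g) x v) 2 (volume.restrict (ball x₀ 1)) := by
        refine eLpNorm_congr_ae ((ae_restrict_mem measurableSet_ball).mono fun x hx => ?_)
        simp only
        rw [((eqOn_convolution_of_eqOn hK hfg).eventuallyEq_of_mem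
          (isOpen_ball.mem_nhds hx)).fderiv_eq]
    _ ≤ eLpNorm (fun x => fderiv ℝ (K ⋆[mul ℝ ℝ] g) x v) 2 volume := eLpNorm_restrict_le _ _ _ _
    _ ≤ ENNReal.ofReal (2 * Real.pi * ‖v‖ * M) * eLpNorm g 2 volume :=
        eLpNorm_fderiv_convolution_le hKi hKc hM hg hgc v
    _ ≤ ENNReal.ofReal (2 * Real.pi * M) * (N * S) := by
        refine mul_le_mul' (ENNReal.ofReal_le_ofReal ?_) ?_
        · rw [mul_assoc (2 * Real.pi)]
          exact mul_le_mul_of_nonneg_left (mul_le_of_le_one_left hM0 hv) (by positivity)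
        · refine (eLpNorm_mono hgle).trans ?_
          rw [eLpNorm_indicator_eq_eLpNorm_restrict measurableSet_ball]
          exact hN f hf.continuous x₀
    _ = ENNReal.ofReal (2 * Real.pi * M * N) * S := by
        rw [← mul_assoc, ENNReal.ofReal_mul (p := 2 * Real.pi * M) (q := N) (by positivity),
          ENNReal.ofReal_natCast]
    _ ≤ _ := by
        gcongr
        linarith

end Localization

section MultiIndex

open scoped ContDiff

variable {d : ℕ} {F : Type*} [NormedAddCommGroup F] [NormedSpace ℝ F]

theorem contDiff_pd {f : EuclideanSpace ℝ (Fin d) → F} (hf : ContDiff ℝ ∞ f) (i : Fin d) :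
    ContDiff ℝ ∞ (pd i f) :=
  (hf.fderiv_right (by simp)).clm_apply contDiff_const

theorem pd_comm {f : EuclideanSpace ℝ (Fin d) → F} (hf : ContDiff ℝ ∞ f) (i j : Fin d) :
    pd i (pd j f) = pd j (pd i f) := by
  ext x
  have hd : DifferentiableAt ℝ (fderiv ℝ f) x :=
    (hf.fderiv_right (m := ∞) (by simp)).differentiable (by simp) x
  have h : ∀ k l : Fin d, pd k (pd l f) x =
      fderiv ℝ (fderiv ℝ f) x (EuclideanSpace.single k 1) (EuclideanSpace.single l 1) := by
    intro k l
    unfold pd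
    rw [fderiv_clm_apply hd (differentiableAt_const _)]
    simp
  rw [h, h]
  exact (hf.contDiffAt.isSymmSndFDerivAt
    (by simpa using ENat.LEInfty.out)).eq _ _

theorem iterate_pd_comm_of_smooth
    {T : (EuclideanSpace ℝ (Fin d) → F) → EuclideanSpace ℝ (Fin d) → F}
    (hT : ∀ f, ContDiff ℝ ∞ f → ∀ j, pd j (T f) = T (pd j f)) (j : Fin d) (n : ℕ)
    {f : EuclideanSpace ℝ (Fin d) → F} (hf : ContDiff ℝ ∞ f) :
    (pd j)^[n] (T f) = T ((pd j)^[n] f) ∧ ContDiff ℝ ∞ ((pd j)^[n] f) := by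
  induction n with
  | zero => exact ⟨rfl, hf⟩
  | succ n ih =>
    rw [Function.iterate_succ_apply', Function.iterate_succ_apply', ih.1, hT _ ih.2]
    exact ⟨rfl, contDiff_pd ih.2 j⟩

/-- An operator commuting with all first partial derivatives commutes with every `D^α`. -/
theorem Dm_comm_of_smooth {T : (EuclideanSpace ℝ (Fin d) → F) → EuclideanSpace ℝ (Fin d) → F}
    (hT : ∀ f, ContDiff ℝ ∞ f → ∀ j, pd j (T f) = T (pd j f)) (α : Fin d → ℕ)
    {f : EuclideanSpace ℝ (Fin d) → F} (hf : ContDiff ℝ ∞ f) :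
    Dm α (T f) = T (Dm α f) ∧ ContDiff ℝ ∞ (Dm α f) := by
  unfold Dm
  induction List.finRange d with
  | nil => exact ⟨rfl, hf⟩
  | cons j l ih =>
    rw [List.foldr_cons, List.foldr_cons, ih.1]
    exact iterate_pd_comm_of_smooth hT j (α j) ih.2

end MultiIndex

/-- **Lemma 2.11 of the paper** (unit cutoff scale): the gradient of convolution
with the truncated kernel `aΨ`, `Ψ(x) = |x|^{1−d}`, is bounded on `H^r_ul`. -/
theorem conv_truncated_kernel_grad (d : ℕ) (hd : 2 ≤ d)
    (a : EuclideanSpace ℝ (Fin d) → ℝ) (ha : ContDiff ℝ (⊤ : ℕ∞) a)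
    (ha0 : ∀ x, 0 ≤ a x) (ha1 : ∀ x, a x ≤ 1)
    (haone : ∀ x ∈ ball (0 : EuclideanSpace ℝ (Fin d)) 1, a x = 1)
    (hasupp : Function.support a ⊆ ball (0 : EuclideanSpace ℝ (Fin d)) 2)
    (r : ℕ) :
    ∃ C : ℝ, 0 < C ∧
      ∀ f : EuclideanSpace ℝ (Fin d) → ℝ, ContDiff ℝ (⊤ : ℕ∞) f →
        ulSobolev d r f ≠ ⊤ →
        (∀ x : EuclideanSpace ℝ (Fin d),
            Integrable (fun y => a y * ‖y‖ ^ ((1 : ℝ) - d) * f (x - y)) volume) ∧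
        ContDiff ℝ 1
          (fun x : EuclideanSpace ℝ (Fin d) =>
            ∫ y, a y * ‖y‖ ^ ((1 : ℝ) - d) * f (x - y)) ∧
        ∀ i : Fin d,
          (∑ α ∈ mSet d r, ⨆ x : EuclideanSpace ℝ (Fin d),
              eLpNorm
                (Dm α (pd i (fun x : EuclideanSpace ℝ (Fin d) =>
                  ∫ y, a y * ‖y‖ ^ ((1 : ℝ) - d) * f (x - y)))) 2
                (volume.restrict (ball x 1)))
            ≤ ENNReal.ofReal C * ulSobolev d r f := by
  set K : EuclideanSpace ℝ (Fin d) → ℝ := fun y => a y * ‖y‖ ^ ((1 : ℝ) - d) with hKdef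
  have hn : Module.finrank ℝ (EuclideanSpace ℝ (Fin d)) = d := by simp
  have hd1 : 1 ≤ d := by omega
  have hac : HasCompactSupport a :=
    .of_support_subset_isCompact (isCompact_closedBall 0 2) (hasupp.trans ball_subset_closedBall)
  have hKsupp : Function.support K ⊆ ball 0 2 :=
    (Function.support_mul_subset_left a _).trans hasupp
  have hKint : Integrable K := by
    refine (integrable_indicator_ball_norm_rpow hn hd1 2).mono'
      (ha.continuous.measurable.mul (by fun_prop)).aestronglyMeasurable (.of_forall fun y => ?_)
    by_cases hy : y ∈ ball (0 : EuclideanSpace ℝ (Fin d)) 2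
    · rw [Set.indicator_of_mem hy, Real.norm_of_nonneg (mul_nonneg (ha0 y) (by positivity))]
      exact mul_le_of_le_one_left (by positivity) (ha1 y)
    · have : K y = 0 := by
        by_contra hne
        exact hy (hKsupp hne)
      rw [this, Set.indicator_of_notMem hy, norm_zero]
  obtain ⟨L, hL⟩ := ha.lipschitzWith_of_hasCompactSupport hac (by simp)
  obtain ⟨C₀, hC₀⟩ := exists_integral_second_diff_truncated_le hn hd1 hL ha0 ha1 hasupp
  obtain ⟨M, hM0, hM⟩ := exists_norm_mul_fourier_le (K := fun y => (K y : ℂ)) (C := C₀)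
    hKint.ofReal fun h hh hh1 => by
      refine (integral_congr_ae (.of_forall fun y => ?_)).trans_le (hC₀ h hh hh1)
      rw [← Real.norm_eq_abs, ← Complex.norm_real]
      simp [hKdef]
  obtain ⟨C, hC, hbound⟩ := exists_iSup_eLpNorm_fderiv_convolution_le hKint hKsupp hM0 hM
  refine ⟨C, hC, fun f hf _ => ⟨fun x => ?_, ?_, fun i => ?_⟩⟩
  · exact HasCompactSupport.convolutionExists_left_of_continuous_right
      (ContinuousLinearMap.mul ℝ ℝ) (hac.mul_right) hKint.locallyIntegrable hf.continuous x
  · exact (contDiff_convolution_of_support_subset hKint hKsupp hf).of_le (by simp)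
  · let T : (EuclideanSpace ℝ (Fin d) → ℝ) → EuclideanSpace ℝ (Fin d) → ℝ :=
      fun g => pd i (convolution K g (ContinuousLinearMap.mul ℝ ℝ) volume)
    have hT : ∀ g, ContDiff ℝ (⊤ : ℕ∞) g → ∀ j, pd j (T g) = T (pd j g) := by
      intro g hg j
      have hj : pd j (convolution K g (ContinuousLinearMap.mul ℝ ℝ) volume) =
          convolution K (pd j g) (ContinuousLinearMap.mul ℝ ℝ) volume :=
        funext fun x => fderiv_convolution_apply hKint hKsupp hg x _
      change pd j (pd i _) = pd i _
      rw [pd_comm (contDiff_convolution_of_support_subset hKint hKsupp hg), hj]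
    rw [ulSobolev, Finset.mul_sum]
    refine Finset.sum_le_sum fun α _ => ?_
    obtain ⟨hcomm, hsmooth⟩ := Dm_comm_of_smooth hT α hf
    change ⨆ x, eLpNorm (Dm α (T f)) 2 (volume.restrict (ball x 1)) ≤ _
    rw [hcomm]
    exact hbound (EuclideanSpace.single i 1) (by simp) _ hsmooth
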